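/- For every Λ > 0 there is a constant C > 0, depending only on φ and Λ, such that for every λ ∈ [0,Λ] and every Schwartz function u : ℝ² → ℂ satisfying Hu = λ²u: ‖u‖_{L^∞(ℝ²)} ≤ C ‖u‖_{L²(ℝ²)}. -/

import Mathlib

noncomputable section

open MeasureTheory Complex

abbrev R2 : Type := EuclideanSpace ℝ (Fin 2)

/-- Partial derivative of a complex-valued function in coordinate direction `j`. -/
def pdC (j : Fin 2) (f : R2 → ℂ) (x : R2) : ℂ :=
  fderiv ℝ f x (EuclideanSpace.single j 1)

/-- The operator `D_j = -i ∂_j` acting on complex-valued functions. -/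
def Dop (j : Fin 2) (f : R2 → ℂ) (x : R2) : ℂ := -Complex.I * pdC j f x

/-- Partial derivative of a real-valued function in coordinate direction `j`. -/
def pdR (j : Fin 2) (f : R2 → ℝ) (x : R2) : ℝ :=
  fderiv ℝ f x (EuclideanSpace.single j 1)

/-- The Laplacian of a real-valued function. -/
def lapR (f : R2 → ℝ) (x : R2) : ℝ := pdR 0 (pdR 0 f) x + pdR 1 (pdR 1 f) x

/-- `A u = (D₁/2 - (∂₂ φ)/2) u`. -/
def opA (φ : R2 → ℝ) (u : R2 → ℂ) (x : R2) : ℂ :=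
  Dop 0 u x / 2 - ((pdR 1 φ x / 2 : ℝ) : ℂ) * u x

/-- `B u = (D₂/2 + (∂₁ φ)/2) u`. -/
def opB (φ : R2 → ℝ) (u : R2 → ℂ) (x : R2) : ℂ :=
  Dop 1 u x / 2 + ((pdR 0 φ x / 2 : ℝ) : ℂ) * u x

/-- `P u = A²u + B²u - (Δφ/4) u - λ² u`. -/
def opP (φ : R2 → ℝ) (l : ℝ) (u : R2 → ℂ) (x : R2) : ℂ :=
  opA φ (opA φ u) x + opB φ (opB φ u) x - ((lapR φ x / 4 : ℝ) : ℂ) * u x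
    - ((l : ℂ)) ^ 2 * u x

/-- The magnetic Laplacian `H u = A²u + B²u - (Δφ/4) u`. -/
def opH (φ : R2 → ℝ) (u : R2 → ℂ) (x : R2) : ℂ :=
  opA φ (opA φ u) x + opB φ (opB φ u) x - ((lapR φ x / 4 : ℝ) : ℂ) * u x

/-!
Write `w = |u|²`. Multiplied by `2i`, each covariant derivative `D_j / 2 + a` becomes `∂_j` plus
multiplication by an imaginary function, and such a multiplication is skew for the real inner
product on `ℂ`. So the usual formula for `∂_j² |u|²` holds with covariant derivatives in place of
partial ones, which gives the diamagnetic identity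
`Δw = 8 (|Au|² + |Bu|²) - 8 Re ⟨Hu, u⟩ - 2 (Δφ) w`.
Hence `Δw ≥ -κ w` with `κ` controlled by `Λ²` and `sup Δφ` alone. A nonnegative function with this
property obeys a mean value inequality: with `η = (1 - |y|²)₊`, for which `-η(y) y` is the
gradient of `η² / 4 ≤ η / 4`, integration by parts shows that `e^{κ s² / 8} ∫ η(y) w(x + s y) dy`
is increasing in `s`. Comparing `s = 0` with `s = 1` bounds `w(x)` by the integral of `w` over the
unit ball around `x`.
-/

open scoped InnerProductSpace RealInnerProductSpace Laplacian

section Calculus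

variable {E F : Type*} [NormedAddCommGroup E] [NormedSpace ℝ E] [NormedAddCommGroup F]
  [NormedSpace ℝ F]

lemma iteratedFDeriv_two_apply_eq_fderiv_fderiv_apply {f : E → F} {x : E}
    (hf : DifferentiableAt ℝ (fderiv ℝ f) x) (e e' : E) :
    iteratedFDeriv ℝ 2 f x ![e, e'] = fderiv ℝ (fun y => fderiv ℝ f y e') x e := by
  rw [iteratedFDeriv_two_apply, fderiv_clm_apply hf (differentiableAt_const e')]
  simp

lemma hasDerivAt_comp_line {f : E → F} {x y : E} {s : ℝ} (hf : DifferentiableAt ℝ f (x + s • y)) :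
    HasDerivAt (fun t : ℝ => f (x + t • y)) (fderiv ℝ f (x + s • y) y) s := by
  have hline : HasDerivAt (fun t : ℝ => x + t • y) y s := by
    simpa using ((hasDerivAt_id s).smul_const y).const_add x
  exact hf.hasFDerivAt.comp_hasDerivAt s hline

lemma fderiv_comp_const_add_smul (f : E → F) (x y : E) (s : ℝ) :
    fderiv ℝ (fun y => f (x + s • y)) y = s • fderiv ℝ f (x + s • y) := by
  rw [fderiv_comp_smul (f := fun z => f (x + z)), fderiv_comp_add_left]

lemma hasDerivAt_max_zero_sq (t : ℝ) : HasDerivAt (fun t : ℝ => max t 0 ^ 2) (2 * max t 0) t := by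
  rw [hasDerivAt_iff_isLittleO]
  refine (Asymptotics.IsBigO.of_bound 1 (.of_forall fun s => ?_)).trans_isLittleO
    (Asymptotics.isLittleO_pow_sub_sub t one_lt_two)
  have hquad : |max s 0 ^ 2 - max t 0 ^ 2 - (s - t) * (2 * max t 0)| ≤ (s - t) ^ 2 := by
    rw [abs_le]
    rcases le_total s 0 with hs | hs <;> rcases le_total t 0 with ht | ht <;>
      simp only [max_eq_left, max_eq_right, hs, ht] <;> constructor <;> nlinarith
  simpa using hquad

variable [MeasurableSpace E] [BorelSpace E] {μ : Measure E}

lemma hasDerivAt_integral_mul_comp_line [IsFiniteMeasureOnCompacts μ] {η w : E → ℝ}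
    (hη : Continuous η) (hηc : HasCompactSupport η) (hw : ContDiff ℝ 1 w) (x : E) (s : ℝ) :
    HasDerivAt (fun t => ∫ y, η y * w (x + t • y) ∂μ)
      (∫ y, η y * fderiv ℝ w (x + s • y) y ∂μ) s := by
  have hwc := hw.continuous
  have := hw.continuous_fderiv one_ne_zero
  have hderiv_cont : Continuous fun p : ℝ × E => fderiv ℝ w (x + p.1 • p.2) p.2 := by fun_prop
  obtain ⟨M, hM⟩ := ((isCompact_Icc (a := s - 1) (b := s + 1)).prod
    hηc.isCompact).exists_bound_of_continuousOn hderiv_cont.continuousOn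
  refine (hasDerivAt_integral_of_dominated_loc_of_deriv_le
    (F' := fun t y => η y * fderiv ℝ w (x + t • y) y) (bound := fun y => |η y| * M)
    (Icc_mem_nhds (sub_one_lt s) (lt_add_one s)) ?_ ?_ ?_ ?_ ?_ ?_).2
  · exact .of_forall fun t => (by fun_prop : Continuous _).aestronglyMeasurable
  · exact (by fun_prop : Continuous _).integrable_of_hasCompactSupport hηc.mul_right
  · exact (by fun_prop : Continuous _).aestronglyMeasurable
  · refine .of_forall fun y t ht => ?_
    rw [norm_mul, Real.norm_eq_abs]
    by_cases hy : y ∈ tsupport η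
    · exact mul_le_mul_of_nonneg_left (hM (t, y) ⟨ht, hy⟩) (abs_nonneg _)
    · simp [image_eq_zero_of_notMem_tsupport hy]
  · exact (hη.integrable_of_hasCompactSupport hηc).abs.mul_const M
  · exact .of_forall fun y t _ =>
      (hasDerivAt_comp_line (hw.differentiable one_ne_zero _)).const_mul (η y)

lemma integral_mul_fderiv_eq_neg_of_hasCompactSupport [FiniteDimensional ℝ E]
    [μ.IsAddHaarMeasure] {f g : E → ℝ} (hf : ContDiff ℝ 1 f) (hfc : HasCompactSupport f)
    (hg : ContDiff ℝ 1 g) (v : E) :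
    ∫ y, f y * fderiv ℝ g y v ∂μ = -∫ y, fderiv ℝ f y v * g y ∂μ := by
  have hf_cont := hf.continuous
  have hg_cont := hg.continuous
  have := hf.continuous_fderiv one_ne_zero
  have := hg.continuous_fderiv one_ne_zero
  refine integral_mul_fderiv_eq_neg_fderiv_mul_of_integrable ?_ ?_ ?_
    (fun y _ => hf.differentiable one_ne_zero y) (fun y _ => hg.differentiable one_ne_zero y)
  · exact (by fun_prop : Continuous _).integrable_of_hasCompactSupport
      (hfc.fderiv_apply (𝕜 := ℝ) v).mul_right
  · exact (by fun_prop : Continuous _).integrable_of_hasCompactSupport hfc.mul_right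
  · exact (by fun_prop : Continuous _).integrable_of_hasCompactSupport hfc.mul_right

end Calculus

section Laplacian

variable {E F : Type*} [NormedAddCommGroup E] [InnerProductSpace ℝ E] [FiniteDimensional ℝ E]
  [NormedAddCommGroup F] [NormedSpace ℝ F]

lemma norm_laplacian_le (f : E → F) (x : E) :
    ‖(Δ f) x‖ ≤ Module.finrank ℝ E * ‖iteratedFDeriv ℝ 2 f x‖ := by
  let b := stdOrthonormalBasis ℝ E
  have hterm : ∀ i, ‖iteratedFDeriv ℝ 2 f x ![b i, b i]‖ ≤ ‖iteratedFDeriv ℝ 2 f x‖ := fun i => by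
    simpa [Fin.prod_univ_two] using (iteratedFDeriv ℝ 2 f x).le_opNorm ![b i, b i]
  rw [InnerProductSpace.laplacian_eq_iteratedFDeriv_orthonormalBasis f b]
  simpa using norm_sum_le_of_le Finset.univ fun i _ => hterm i

lemma continuous_laplacian {f : E → F} (hf : ContDiff ℝ 2 f) : Continuous (Δ f) := by
  rw [InnerProductSpace.laplacian_eq_iteratedFDeriv_stdOrthonormalBasis]
  have := hf.continuous_iteratedFDeriv (m := 2) le_rfl
  fun_prop

lemma integral_mul_fderiv_comp_line_eq_mul_integral_laplacian [MeasurableSpace E] [BorelSpace E]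
    {μ : Measure E} [μ.IsAddHaarMeasure] {Ψ η w : E → ℝ} (hη : Continuous η)
    (hηc : HasCompactSupport η) (hΨc : HasCompactSupport Ψ)
    (hΨ : ∀ y, HasFDerivAt Ψ (-η y • innerSL ℝ y) y) (hw : ContDiff ℝ 2 w) (x : E) (s : ℝ) :
    ∫ y, η y * fderiv ℝ w (x + s • y) y ∂μ = s * ∫ y, Ψ y * (Δ w) (x + s • y) ∂μ := by
  let b := stdOrthonormalBasis ℝ E
  have hΨ_C1 : ContDiff ℝ 1 Ψ := contDiff_one_iff_hasFDerivAt.2 ⟨_, by fun_prop, hΨ⟩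
  have hΨ_cont := hΨ_C1.continuous
  have hfderiv : ContDiff ℝ 1 (fderiv ℝ w) := hw.fderiv_right (by norm_num)
  have hfderiv_diff := hfderiv.differentiable one_ne_zero
  have hdw : ∀ i, ContDiff ℝ 1 fun z => fderiv ℝ w z (b i) := fun i =>
    hfderiv.clm_apply contDiff_const
  have := fun i => (hdw i).continuous
  have := hw.continuous_iteratedFDeriv (m := 2) le_rfl
  have hparts : ∀ i, ∫ y, η y * (⟪b i, y⟫ * fderiv ℝ w (x + s • y) (b i)) ∂μ
      = ∫ y, Ψ y * (s * iteratedFDeriv ℝ 2 w (x + s • y) ![b i, b i]) ∂μ := fun i => by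
    have h := integral_mul_fderiv_eq_neg_of_hasCompactSupport (μ := μ) hΨ_C1 hΨc
      (g := fun y => fderiv ℝ w (x + s • y) (b i)) ((hdw i).comp (by fun_prop)) (b i)
    simp only [fderiv_comp_const_add_smul fun z => fderiv ℝ w z (b i), (hΨ _).fderiv,
      ← integral_neg] at h
    simpa [iteratedFDeriv_two_apply_eq_fderiv_fderiv_apply (hfderiv_diff _), real_inner_comm,
      mul_assoc] using h.symm
  have hexpand : ∀ y, fderiv ℝ w (x + s • y) y
      = ∑ i, ⟪b i, y⟫ * fderiv ℝ w (x + s • y) (b i) := fun y => by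
    simpa [map_sum] using (congrArg (fderiv ℝ w (x + s • y)) (b.sum_repr' y)).symm
  have hint_first : ∀ i, Integrable
      (fun y => η y * (⟪b i, y⟫ * fderiv ℝ w (x + s • y) (b i))) μ := fun i =>
    (by fun_prop : Continuous _).integrable_of_hasCompactSupport hηc.mul_right
  have hint_second : ∀ i, Integrable
      (fun y => Ψ y * (s * iteratedFDeriv ℝ 2 w (x + s • y) ![b i, b i])) μ := fun i =>
    (by fun_prop : Continuous _).integrable_of_hasCompactSupport hΨc.mul_right
  simp only [hexpand, InnerProductSpace.laplacian_eq_iteratedFDeriv_orthonormalBasis w b,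
    ← integral_const_mul, mul_left_comm s, Finset.mul_sum]
  rw [integral_finsetSum _ fun i _ => hint_first i, integral_finsetSum _ fun i _ => hint_second i]
  exact Finset.sum_congr rfl fun i _ => hparts i

end Laplacian

section TruncParaboloid

variable {E : Type*} [NormedAddCommGroup E]

/-- The truncated paraboloid `(1 - ‖y‖²)₊`, the radial weight against which the mean value
inequality is proved. It is chosen because `(1 - ‖y‖²)₊ y` is minus the gradient of
`(1 - ‖y‖²)₊ ^ 2 / 4`, which is itself dominated by `(1 - ‖y‖²)₊ / 4`. -/
def truncParaboloid (y : E) : ℝ := max (1 - ‖y‖ ^ 2) 0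

lemma truncParaboloid_nonneg (y : E) : 0 ≤ truncParaboloid y := le_max_right _ _

lemma truncParaboloid_le_one (y : E) : truncParaboloid y ≤ 1 :=
  max_le (by linarith [sq_nonneg ‖y‖]) zero_le_one

lemma continuous_truncParaboloid : Continuous (truncParaboloid : E → ℝ) := by
  unfold truncParaboloid
  fun_prop

lemma truncParaboloid_eq_zero {y : E} (hy : y ∉ Metric.closedBall 0 1) :
    truncParaboloid y = 0 := by
  rw [mem_closedBall_zero_iff, not_le] at hy
  exact max_eq_right (by nlinarith)

lemma hasCompactSupport_truncParaboloid [ProperSpace E] :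
    HasCompactSupport (truncParaboloid : E → ℝ) :=
  .intro (isCompact_closedBall 0 1) fun _ => truncParaboloid_eq_zero

lemma integral_truncParaboloid_pos [ProperSpace E] [MeasurableSpace E] [BorelSpace E]
    {μ : Measure E} [IsFiniteMeasureOnCompacts μ] [μ.IsOpenPosMeasure] :
    0 < ∫ y, truncParaboloid y ∂μ :=
  continuous_truncParaboloid.integral_pos_of_hasCompactSupport_nonneg_nonzero
    hasCompactSupport_truncParaboloid truncParaboloid_nonneg (x := 0) (by simp [truncParaboloid])

lemma hasFDerivAt_truncParaboloid_sq [InnerProductSpace ℝ E] (y : E) :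
    HasFDerivAt (fun y : E => truncParaboloid y ^ 2 / 4) (-truncParaboloid y • innerSL ℝ y) y := by
  have hnorm : HasFDerivAt (fun y : E => 1 - ‖y‖ ^ 2) (-(2 • innerSL ℝ y)) y :=
    (hasStrictFDerivAt_norm_sq y).hasFDerivAt.const_sub 1
  have h := ((hasDerivAt_max_zero_sq (1 - ‖y‖ ^ 2)).comp_hasFDerivAt y hnorm).const_mul (1 / 4)
  refine (h.congr_of_eventuallyEq (.of_forall fun z => ?_)).congr_fderiv ?_
  · simp only [truncParaboloid, Function.comp_apply]
    ring
  · ext z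
    simp only [truncParaboloid, smul_neg, neg_smul, neg_apply, smul_apply, smul_eq_mul,
      nsmul_eq_mul, Nat.cast_ofNat]
    ring

end TruncParaboloid

section MeanValue

variable {E : Type*} [NormedAddCommGroup E] [InnerProductSpace ℝ E] [FiniteDimensional ℝ E]
  [MeasurableSpace E] [BorelSpace E] {μ : Measure E} [μ.IsAddHaarMeasure]
  {w : E → ℝ} {κ : ℝ}

lemma neg_mul_integral_truncParaboloid_le_integral_mul_fderiv (hw : ContDiff ℝ 2 w)
    (hw0 : ∀ z, 0 ≤ w z) (hκ : 0 ≤ κ) (hΔ : ∀ z, -κ * w z ≤ (Δ w) z) (x : E) {s : ℝ}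
    (hs : 0 ≤ s) :
    -(κ * s / 4) * ∫ y, truncParaboloid y * w (x + s • y) ∂μ
      ≤ ∫ y, truncParaboloid y * fderiv ℝ w (x + s • y) y ∂μ := by
  have hη : Continuous (truncParaboloid : E → ℝ) := continuous_truncParaboloid
  have hηc : HasCompactSupport (truncParaboloid : E → ℝ) := hasCompactSupport_truncParaboloid
  have hΨc : HasCompactSupport fun y : E => truncParaboloid y ^ 2 / 4 :=
    hηc.comp_left (g := fun t => t ^ 2 / 4) (by norm_num)
  have hwc := hw.continuous
  have hΔc := continuous_laplacian hw
  have hpointwise : ∀ y, -(κ / 4) * (truncParaboloid y * w (x + s • y))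
      ≤ truncParaboloid y ^ 2 / 4 * (Δ w) (x + s • y) := fun y => by
    have hη0 := truncParaboloid_nonneg y
    have hsq : truncParaboloid y ^ 2 ≤ truncParaboloid y :=
      pow_le_of_le_one hη0 (truncParaboloid_le_one y) two_ne_zero
    calc -(κ / 4) * (truncParaboloid y * w (x + s • y))
        = -(κ * w (x + s • y) / 4 * truncParaboloid y) := by ring
      _ ≤ -(κ * w (x + s • y) / 4 * truncParaboloid y ^ 2) := by
          have := hw0 (x + s • y)
          gcongr
      _ = truncParaboloid y ^ 2 / 4 * (-κ * w (x + s • y)) := by ring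
      _ ≤ _ := mul_le_mul_of_nonneg_left (hΔ _) (by positivity)
  have hmono : -(κ / 4) * ∫ y, truncParaboloid y * w (x + s • y) ∂μ
      ≤ ∫ y, truncParaboloid y ^ 2 / 4 * (Δ w) (x + s • y) ∂μ := by
    rw [← integral_const_mul]
    refine integral_mono (Integrable.const_mul ?_ _) ?_ hpointwise
    · exact (by fun_prop : Continuous _).integrable_of_hasCompactSupport hηc.mul_right
    · exact (by fun_prop : Continuous _).integrable_of_hasCompactSupport hΨc.mul_right
  rw [integral_mul_fderiv_comp_line_eq_mul_integral_laplacian hη hηc hΨc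
    hasFDerivAt_truncParaboloid_sq hw]
  calc -(κ * s / 4) * ∫ y, truncParaboloid y * w (x + s • y) ∂μ
      = s * (-(κ / 4) * ∫ y, truncParaboloid y * w (x + s • y) ∂μ) := by ring
    _ ≤ _ := mul_le_mul_of_nonneg_left hmono hs

lemma mul_integral_truncParaboloid_le (hw : ContDiff ℝ 2 w) (hw0 : ∀ z, 0 ≤ w z) (hκ : 0 ≤ κ)
    (hΔ : ∀ z, -κ * w z ≤ (Δ w) z) (x : E) :
    w x * ∫ y, truncParaboloid y ∂μ
      ≤ Real.exp (κ / 8) * ∫ y, truncParaboloid y * w (x + y) ∂μ := by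
  let avg : ℝ → ℝ := fun s => ∫ y, truncParaboloid y * w (x + s • y) ∂μ
  let avg' : ℝ → ℝ := fun s => ∫ y, truncParaboloid y * fderiv ℝ w (x + s • y) y ∂μ
  have havg : ∀ s, HasDerivAt avg (avg' s) s := fun s =>
    hasDerivAt_integral_mul_comp_line continuous_truncParaboloid hasCompactSupport_truncParaboloid
      (hw.of_le one_le_two) x s
  have hprod : ∀ s, HasDerivAt (fun s => Real.exp (κ / 8 * s ^ 2) * avg s)
      (Real.exp (κ / 8 * s ^ 2) * (κ * s / 4 * avg s + avg' s)) s := fun s => by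
    have hexp := ((hasDerivAt_pow 2 s).const_mul (κ / 8)).exp
    refine (hexp.mul (havg s)).congr_deriv ?_
    push_cast
    ring
  have hmono : MonotoneOn (fun s => Real.exp (κ / 8 * s ^ 2) * avg s) (Set.Ici 0) := by
    refine monotoneOn_of_hasDerivWithinAt_nonneg (convex_Ici 0)
      (fun s _ => (hprod s).continuousAt.continuousWithinAt)
      (fun s _ => (hprod s).hasDerivWithinAt) fun s hs => ?_
    have hge := neg_mul_integral_truncParaboloid_le_integral_mul_fderiv (μ := μ) hw hw0 hκ hΔ x
      (interior_subset hs)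
    exact mul_nonneg (Real.exp_pos _).le (by linarith)
  simpa [avg, integral_const_mul, mul_comm] using
    hmono Set.self_mem_Ici (Set.mem_Ici.2 zero_le_one) zero_le_one

theorem mul_integral_truncParaboloid_le_setIntegral_closedBall (hw : ContDiff ℝ 2 w)
    (hw0 : ∀ z, 0 ≤ w z) (hκ : 0 ≤ κ) (hΔ : ∀ z, -κ * w z ≤ (Δ w) z) (x : E) :
    w x * ∫ y, truncParaboloid y ∂μ
      ≤ Real.exp (κ / 8) * ∫ y in Metric.closedBall x 1, w y ∂μ := by
  have hη : Continuous (truncParaboloid : E → ℝ) := continuous_truncParaboloid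
  have hwc := hw.continuous
  have htranslate : ∫ y, truncParaboloid y * w (x + y) ∂μ
      = ∫ y, truncParaboloid (y - x) * w y ∂μ := by
    simpa using integral_add_left_eq_self (μ := μ) (fun y => truncParaboloid (y - x) * w y) x
  have hlocal : ∫ y, truncParaboloid (y - x) * w y ∂μ
      = ∫ y in Metric.closedBall x 1, truncParaboloid (y - x) * w y ∂μ := by
    refine (setIntegral_eq_integral_of_forall_compl_eq_zero fun y hy => ?_).symm
    rw [truncParaboloid_eq_zero (by simpa [dist_eq_norm] using hy), zero_mul]
  refine (mul_integral_truncParaboloid_le hw hw0 hκ hΔ x).trans ?_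
  rw [htranslate, hlocal]
  gcongr ?_ * ?_
  refine setIntegral_mono ?_ ?_ fun y =>
    mul_le_of_le_one_left (hw0 y) (truncParaboloid_le_one (y - x))
  · exact (by fun_prop : Continuous _).continuousOn.integrableOn_compact (isCompact_closedBall x 1)
  · exact hwc.continuousOn.integrableOn_compact (isCompact_closedBall x 1)

end MeanValue

section Lp

lemma eLpNorm_top_le_of_norm_sq_le {α F : Type*} [MeasurableSpace α] {μ : Measure α}
    [NormedAddCommGroup F] {f : α → F} {c : ℝ} (hf : MemLp f 2 μ)
    (hle : ∀ x, ‖f x‖ ^ 2 ≤ c * ∫ y, ‖f y‖ ^ 2 ∂μ) :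
    eLpNorm f ⊤ μ ≤ ENNReal.ofReal √c * eLpNorm f 2 μ := by
  have hsup : ∀ x, ‖f x‖ ≤ √c * √(∫ y, ‖f y‖ ^ 2 ∂μ) := fun x => by
    rw [← Real.sqrt_mul' c (integral_nonneg fun y => sq_nonneg ‖f y‖)]
    exact Real.le_sqrt_of_sq_le (hle x)
  have hL2 : eLpNorm f 2 μ = ENNReal.ofReal √(∫ y, ‖f y‖ ^ 2 ∂μ) := by
    simp [hf.eLpNorm_eq_integral_rpow_norm two_ne_zero ENNReal.ofNat_ne_top, Real.sqrt_eq_rpow]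
  rw [hL2, ← ENNReal.ofReal_mul (Real.sqrt_nonneg c), eLpNorm_exponent_top]
  exact eLpNormEssSup_le_of_ae_bound (.of_forall hsup)

end Lp

section CoordinateLaplacian

lemma contDiff_pdR {f : R2 → ℝ} (hf : ContDiff ℝ 2 f) (j : Fin 2) : ContDiff ℝ 1 (pdR j f) :=
  (hf.fderiv_right (m := 1) (by norm_num)).clm_apply contDiff_const

lemma contDiff_Dop {u : R2 → ℂ} (hu : ContDiff ℝ 2 u) (j : Fin 2) : ContDiff ℝ 1 (Dop j u) :=
  contDiff_const.mul ((hu.fderiv_right (m := 1) (by norm_num)).clm_apply contDiff_const)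

lemma lapR_eq_laplacian {f : R2 → ℝ} (hf : ContDiff ℝ 2 f) : lapR f = Δ f := by
  ext x
  have hdf : DifferentiableAt ℝ (fderiv ℝ f) x :=
    (hf.fderiv_right (m := 1) (by norm_num)).differentiable one_ne_zero x
  simp only [InnerProductSpace.laplacian_eq_iteratedFDeriv_orthonormalBasis f
    (EuclideanSpace.basisFun (Fin 2) ℝ), iteratedFDeriv_two_apply_eq_fderiv_fderiv_apply hdf,
    Fin.sum_univ_two, EuclideanSpace.basisFun_apply]
  rfl

lemma exists_lapR_le {f : R2 → ℝ} (hf : ContDiff ℝ 2 f)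
    (hbd : ∃ C : ℝ, ∀ x, ‖iteratedFDeriv ℝ 2 f x‖ ≤ C) : ∃ M, ∀ x, lapR f x ≤ M := by
  obtain ⟨C, hC⟩ := hbd
  refine ⟨Module.finrank ℝ R2 * C, fun x => ?_⟩
  rw [lapR_eq_laplacian hf]
  exact (le_abs_self _).trans ((norm_laplacian_le f x).trans (by gcongr; exact hC x))

end CoordinateLaplacian

section Magnetic

variable {φ a : R2 → ℝ} {u v : R2 → ℂ} {x : R2}

/-- The covariant derivative `D_j / 2 + a` with real potential `a`, the common form of the two
first-order operators `opA` and `opB` making up the magnetic Laplacian. -/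
def covD (j : Fin 2) (a : R2 → ℝ) (u : R2 → ℂ) (x : R2) : ℂ := Dop j u x / 2 + a x * u x

lemma opA_eq_covD (φ : R2 → ℝ) : opA φ = covD 0 fun x => -(pdR 1 φ x / 2) := by
  ext u x
  simp [opA, covD, sub_eq_add_neg]

lemma opB_eq_covD (φ : R2 → ℝ) : opB φ = covD 1 fun x => pdR 0 φ x / 2 := rfl

lemma differentiable_covD (ha : Differentiable ℝ a) (hu : ContDiff ℝ 2 u) (j : Fin 2) :
    Differentiable ℝ (covD j a u) := by
  have hD := (contDiff_Dop hu j).differentiable one_ne_zero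
  have hu' := hu.differentiable two_ne_zero
  have : Differentiable ℝ fun x => (a x : ℂ) := ofRealCLM.differentiable.comp ha
  unfold covD
  fun_prop

lemma covD_I_mul (hu : DifferentiableAt ℝ u x) (j : Fin 2) :
    covD j a (fun y => I * u y) x = I * covD j a u x := by
  simp only [covD, Dop, pdC, fderiv_const_mul hu, smul_apply, smul_eq_mul]
  ring

lemma pdC_eq_covD (j : Fin 2) (a : R2 → ℝ) (u : R2 → ℂ) (x : R2) :
    pdC j u x = (2 : ℝ) • (I * covD j a u x) - (2 * a x) • (I * u x) := by
  have hI : I ^ 2 = -1 := I_sq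
  simp only [covD, Dop, real_smul, ofReal_mul, ofReal_ofNat]
  linear_combination pdC j u x * hI

lemma inner_I_mul_left (z w : ℂ) : ⟪I * z, w⟫_ℝ = -⟪z, I * w⟫_ℝ := by
  rw [Complex.inner, Complex.inner, map_mul, conj_I, ← neg_re]
  ring_nf

lemma pdR_inner (hu : DifferentiableAt ℝ u x) (hv : DifferentiableAt ℝ v x) (j : Fin 2)
    (a : R2 → ℝ) :
    pdR j (fun y => ⟪u y, v y⟫_ℝ) x
      = 2 * (⟪I * covD j a u x, v x⟫_ℝ + ⟪u x, I * covD j a v x⟫_ℝ) := by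
  calc pdR j (fun y => ⟪u y, v y⟫_ℝ) x = ⟪u x, pdC j v x⟫_ℝ + ⟪pdC j u x, v x⟫_ℝ :=
        fderiv_inner_apply ℝ hu hv _
    _ = 2 * (⟪I * covD j a u x, v x⟫_ℝ + ⟪u x, I * covD j a v x⟫_ℝ) := by
        simp only [pdC_eq_covD j a, inner_sub_left, inner_sub_right, real_inner_smul_left,
          real_inner_smul_right, inner_I_mul_left (u x)]
        ring

lemma pdR_pdR_norm_sq (ha : Differentiable ℝ a) (hu : ContDiff ℝ 2 u) (j : Fin 2) (x : R2) :
    pdR j (pdR j fun y => ‖u y‖ ^ 2) x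
      = 8 * (‖covD j a u x‖ ^ 2 - ⟪covD j a (covD j a u) x, u x⟫_ℝ) := by
  have hu' := hu.differentiable two_ne_zero
  have hX := differentiable_covD ha hu j
  have hIX : DifferentiableAt ℝ (fun y => I * covD j a u y) x := (hX x).const_mul I
  have hfirst : (pdR j fun y => ‖u y‖ ^ 2) = fun y => 4 * ⟪I * covD j a u y, u y⟫_ℝ := by
    ext y
    simp_rw [← real_inner_self_eq_norm_sq]
    rw [pdR_inner (hu' y) (hu' y) j a, real_inner_comm (I * covD j a u y)]
    ring
  have hsecond : pdR j (fun y => ⟪I * covD j a u y, u y⟫_ℝ) x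
      = 2 * (‖covD j a u x‖ ^ 2 - ⟪covD j a (covD j a u) x, u x⟫_ℝ) := by
    rw [pdR_inner hIX (hu' x) j a, covD_I_mul (hX x), ← mul_assoc, I_mul_I, neg_one_mul,
      inner_neg_left, real_inner_self_eq_norm_sq, norm_mul, norm_I, one_mul]
    ring
  rw [hfirst, pdR, fderiv_const_mul (hIX.inner ℝ (hu' x))]
  change 4 * pdR j _ x = _
  rw [hsecond]
  ring

lemma lapR_norm_sq (hφ : ContDiff ℝ 2 φ) (hu : ContDiff ℝ 2 u) (x : R2) :
    lapR (fun y => ‖u y‖ ^ 2) x = 8 * (‖opA φ u x‖ ^ 2 + ‖opB φ u x‖ ^ 2)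
      - 8 * ⟪opH φ u x, u x⟫_ℝ - 2 * lapR φ x * ‖u x‖ ^ 2 := by
  have hH : ⟪opH φ u x, u x⟫_ℝ = ⟪opA φ (opA φ u) x, u x⟫_ℝ + ⟪opB φ (opB φ u) x, u x⟫_ℝ
      - lapR φ x / 4 * ‖u x‖ ^ 2 := by
    rw [opH, inner_sub_left, inner_add_left, ← real_smul, real_inner_smul_left,
      real_inner_self_eq_norm_sq]
  have hpotential : ∀ j, Differentiable ℝ fun x => pdR j φ x / 2 := fun j =>
    ((contDiff_pdR hφ j).div_const 2).differentiable one_ne_zero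
  have hA := pdR_pdR_norm_sq (hpotential 1).fun_neg hu 0 x
  have hB := pdR_pdR_norm_sq (hpotential 0) hu 1 x
  rw [← opA_eq_covD] at hA
  rw [← opB_eq_covD] at hB
  rw [lapR, hA, hB, hH]
  ring

lemma neg_mul_norm_sq_le_laplacian_norm_sq (hφ : ContDiff ℝ 2 φ) (hu : ContDiff ℝ 2 u) {M N : ℝ}
    (hM : lapR φ x ≤ M) (hN : ⟪opH φ u x, u x⟫_ℝ ≤ N * ‖u x‖ ^ 2) :
    -(8 * N + 2 * M) * ‖u x‖ ^ 2 ≤ (Δ fun y => ‖u y‖ ^ 2) x := by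
  rw [← lapR_eq_laplacian (hu.norm_sq ℝ), lapR_norm_sq hφ hu]
  have hcov : 0 ≤ ‖opA φ u x‖ ^ 2 + ‖opB φ u x‖ ^ 2 := by positivity
  have hpot : lapR φ x * ‖u x‖ ^ 2 ≤ M * ‖u x‖ ^ 2 := by gcongr
  linarith

lemma inner_ofReal_sq_mul_self_le {l Λ : ℝ} (hl : l ∈ Set.Icc 0 Λ) (z : ℂ) :
    ⟪(l : ℂ) ^ 2 * z, z⟫_ℝ ≤ Λ ^ 2 * ‖z‖ ^ 2 := by
  rw [← ofReal_pow, ← real_smul, real_inner_smul_left, real_inner_self_eq_norm_sq]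
  have := hl.1
  gcongr
  exact hl.2

end Magnetic

theorem stmt16_general (M N : ℝ) :
    ∃ C > 0, ∀ φ : R2 → ℝ, ContDiff ℝ 2 φ → (∀ x, lapR φ x ≤ M) → ∀ u : R2 → ℂ, ContDiff ℝ 2 u →
      (∀ x, ⟪opH φ u x, u x⟫_ℝ ≤ N * ‖u x‖ ^ 2) →
      eLpNorm u ⊤ volume ≤ ENNReal.ofReal C * eLpNorm u 2 volume := by
  have hmass : 0 < ∫ y : R2, truncParaboloid y := integral_truncParaboloid_pos
  set κ : ℝ := max (8 * N + 2 * M) 0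
  have hC : 0 < √(Real.exp (κ / 8) / ∫ y : R2, truncParaboloid y) := by positivity
  refine ⟨_, hC, fun φ hφ hM u hu hN => ?_⟩
  by_cases hu2 : eLpNorm u 2 volume = ⊤
  · simp [hu2, hC]
  have hmem : MemLp u 2 := ⟨hu.continuous.aestronglyMeasurable, lt_top_iff_ne_top.2 hu2⟩
  have hΔ : ∀ z, -κ * ‖u z‖ ^ 2 ≤ (Δ fun y => ‖u y‖ ^ 2) z := fun z =>
    (mul_le_mul_of_nonneg_right (neg_le_neg (le_max_left _ _)) (sq_nonneg _)).trans
      (neg_mul_norm_sq_le_laplacian_norm_sq hφ hu (hM z) (hN z))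
  refine eLpNorm_top_le_of_norm_sq_le hmem fun x => ?_
  rw [div_mul_eq_mul_div, le_div_iff₀ hmass]
  refine (mul_integral_truncParaboloid_le_setIntegral_closedBall (hu.norm_sq ℝ)
    (fun z => sq_nonneg ‖u z‖) (le_max_right _ _) hΔ x).trans ?_
  gcongr ?_ * ?_
  exact setIntegral_le_integral (hmem.integrable_norm_pow two_ne_zero)
    (.of_forall fun y => sq_nonneg ‖u y‖)

/-- Small-eigenvalue case: for `λ ∈ [0,Λ]`, eigenfunctions `Hu = λ²u` satisfy
`‖u‖_{L^∞} ≤ C ‖u‖_{L²}`. -/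
theorem stmt16 (φ : R2 → ℝ) (hφ_smooth : ContDiff ℝ (⊤ : ℕ∞) φ)
    (hφ_bd : ∀ n : ℕ, 2 ≤ n → ∃ C : ℝ, ∀ x : R2, ‖iteratedFDeriv ℝ n φ x‖ ≤ C) :
    ∀ Λ : ℝ, 0 < Λ → ∃ C > 0, ∀ l ∈ Set.Icc (0 : ℝ) Λ, ∀ u : SchwartzMap R2 ℂ,
      (∀ x : R2, opH φ (⇑u) x = ((l : ℂ)) ^ 2 * u x) →
      eLpNorm (⇑u) ⊤ volume ≤ ENNReal.ofReal C * eLpNorm (⇑u) 2 volume := by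
  intro Λ _
  have hφ : ContDiff ℝ 2 φ := contDiff_infty.1 hφ_smooth 2
  obtain ⟨M, hM⟩ := exists_lapR_le hφ (hφ_bd 2 le_rfl)
  obtain ⟨C, hC, hbound⟩ := stmt16_general M (Λ ^ 2)
  exact ⟨C, hC, fun l hl u hu => hbound φ hφ hM u (u.smooth 2) fun x =>
    hu x ▸ inner_ofReal_sq_mul_self_le hl (u x)⟩
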